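/- arXiv:2511.03870 — 2 statements merged into one kernel-verified Lean document; each statement's English description precedes it below -/
import Mathlib

section
/- For every integer N ≥ 2 and all distinct k, l ∈ {1,…,N}, there exist an integer M ≤ 192·N² − 16·N − 122, real rotation angles, and a real phase φ such that the N-qubit Ry-Rz-CZ ansatz circuit of depth M with those angles equals e^{iφ}·CNOT_{k,l} (control qubit k, target qubit l). -/
/-!
Conjugation turns the ladder `L` into a tool for building Pauli rotations. For an involution `P`
put `rot P = (1 + iP)/√2 = exp(iπ/4 · P)`; then `U (rot P) U⁻¹ = rot (U P U⁻¹)`. A generator is a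
Pauli-type operator `P` whose rotation is a circuit of ladders and *arbitrary* local layers.
New generators arise in two ways: `LPL` from `P` (`Gen.ladder_conj`, two extra ladders), and `iPQ`
from anticommuting `P`, `Q` (`Gen.comm`, twice the cost of `P` plus that of `Q`), because
`rot P · Q · (rot P)⁻¹ = iPQ`.

Starting from `X_0` at the end of the chain, `L X_0 L = X_0 Z_1`; exchanging `X` and `Z` on both
sites gives `Z_0 X_1`, and `L (Z_0 X_1) L = X_1 Z_2` since the two factors `Z_0` cancel. Iterating,
every nearest-neighbour `X_j Z_{j+1}` is a generator with a linear number of ladders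
(`gen_neighbour`). Two commutators with nearest-neighbour generators carry `Z_k X_l` to
`Z_k X_{l+1}` (`Gen.hop`), so every `Z_k X_l` costs at most `8 N²` ladders (`gen_zx`). Finally
`CNOT_{c,t} = e^{iπ/4} rot (-Z_c) rot (-X_t) rot (Z_c X_t)` (`CNOT_eq_rot`).

Arbitrary local layers are replaced by `Rz Ry` layers through the Euler decomposition
`e^{iφ} Rz Ry Rz` (`Circ.ans`): the `Rz` applied first commutes with the diagonal ladder and is
absorbed by the preceding layer, and the one left at the start of the circuit is handled with two
more ladders, using `L² = 1`. The total depth is at most `8 N² + 2`.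
-/

open Complex

noncomputable section

/-- Basis states of `N` qubits: bit strings of length `N` (qubit `k` (1-based) ↦ index `k-1`). -/
abbrev QState (N : ℕ) := Fin N → ZMod 2

/-- Operators on `(ℂ²)^{⊗N}`, as matrices in the computational basis. -/
abbrev QOp (N : ℕ) := Matrix (QState N) (QState N) ℂ

/-- Ry(θ) = [[cos(θ/2), −sin(θ/2)], [sin(θ/2), cos(θ/2)]]. -/
def RyM (θ : ℝ) : Matrix (ZMod 2) (ZMod 2) ℂ :=
  Matrix.of fun a b =>
    if a = 0 then (if b = 0 then ((Real.cos (θ/2) : ℝ) : ℂ) else -((Real.sin (θ/2) : ℝ) : ℂ))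
    else (if b = 0 then ((Real.sin (θ/2) : ℝ) : ℂ) else ((Real.cos (θ/2) : ℝ) : ℂ))

/-- Rz(θ) = diag(e^{−iθ/2}, e^{iθ/2}). -/
def RzM (θ : ℝ) : Matrix (ZMod 2) (ZMod 2) ℂ :=
  Matrix.of fun a b =>
    if a = b then
      (if a = 0 then Complex.exp (-(θ/2 : ℝ) * Complex.I) else Complex.exp ((θ/2 : ℝ) * Complex.I))
    else 0

/-- Hadamard gate. -/
def HM : Matrix (ZMod 2) (ZMod 2) ℂ :=
  Matrix.of fun a b => (1 / ((Real.sqrt 2 : ℝ) : ℂ)) * (if a = 1 ∧ b = 1 then -1 else 1)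

/-- T gate = diag(1, e^{iπ/4}). -/
def TM : Matrix (ZMod 2) (ZMod 2) ℂ :=
  Matrix.of fun a b =>
    if a = b then (if a = 0 then 1 else Complex.exp ((Real.pi/4 : ℝ) * Complex.I)) else 0

/-- S gate = diag(1, i). -/
def SM : Matrix (ZMod 2) (ZMod 2) ℂ :=
  Matrix.of fun a b => if a = b then (if a = 0 then 1 else Complex.I) else 0

/-- S† gate = diag(1, −i). -/
def SdgM : Matrix (ZMod 2) (ZMod 2) ℂ :=
  Matrix.of fun a b => if a = b then (if a = 0 then 1 else -Complex.I) else 0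

/-- Pauli X gate. -/
def XM : Matrix (ZMod 2) (ZMod 2) ℂ :=
  Matrix.of fun a b => if a = b then 0 else 1

/-- A single-qubit gate `g` acting on qubit with 0-based index `k`, identity elsewhere. -/
def gate1 {N : ℕ} (g : Matrix (ZMod 2) (ZMod 2) ℂ) (k : Fin N) : QOp N :=
  Matrix.of fun x y => if ∀ j, j ≠ k → x j = y j then g (x k) (y k) else 0

/-- CZ gate on (0-based) qubits `k`, `l`. -/
def CZg {N : ℕ} (k l : Fin N) : QOp N :=
  Matrix.of fun x y => if x = y then (if x k = 1 ∧ x l = 1 then (-1 : ℂ) else 1) else 0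

/-- CNOT gate with control `c` and target `t` (0-based): |y⟩ ↦ |y with bit t replaced by y t + y c⟩. -/
def CNOTg {N : ℕ} (c t : Fin N) : QOp N :=
  Matrix.of fun x y => if x = Function.update y t (y t + y c) then (1 : ℂ) else 0

/-- The `k`-th bit (0-based) of a basis state, `0` when out of range. -/
def bitAt {N : ℕ} (x : QState N) (k : ℕ) : ZMod 2 :=
  if h : k < N then x ⟨k, h⟩ else 0

/-- Ladder of CZ gates: `∏_{k=1}^{N−1} CZ_{k,k+1}` (all factors commute, so it is
the diagonal matrix with entry `(−1)^{#{adjacent 11 pairs}}`). -/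
def ladderCZ (N : ℕ) : QOp N :=
  Matrix.of fun x y =>
    if x = y then
      ∏ k ∈ Finset.range (N - 1), (if bitAt x k = 1 ∧ bitAt x (k + 1) = 1 then (-1 : ℂ) else 1)
    else 0

/-- First CNOT layer of the ladder: simultaneous CNOT_{k+1,k} for 1-based `k ∈ {1,…,N−1}`,
`k ≢ N (mod 2)` (control qubit `k+1`, target qubit `k`; disjoint pairs). -/
def layer1Map (N : ℕ) (y : QState N) : QState N :=
  fun i => if (i : ℕ) + 1 < N ∧ ((i : ℕ) + 1) % 2 ≠ N % 2 then y i + bitAt y ((i : ℕ) + 1) else y i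

/-- Second CNOT layer of the ladder: simultaneous CNOT_{k+1,k} for 1-based `k ∈ {1,…,N−1}`,
`k ≡ N (mod 2)`. -/
def layer2Map (N : ℕ) (y : QState N) : QState N :=
  fun i => if (i : ℕ) + 1 < N ∧ ((i : ℕ) + 1) % 2 = N % 2 then y i + bitAt y ((i : ℕ) + 1) else y i

/-- Ladder of CNOT gates: `L₂ · L₁` with `L₁` applied first. It is a permutation
matrix of the composed bit-string map. -/
def ladderCNOT (N : ℕ) : QOp N :=
  Matrix.of fun x y => if x = layer2Map N (layer1Map N y) then (1 : ℂ) else 0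

/-- Rotation layer `⊗_{k} Rz(β_k)·Ry(α_k)`. -/
def rotYZ {N : ℕ} (α β : Fin N → ℝ) : QOp N :=
  Matrix.of fun x y => ∏ k : Fin N, (RzM (β k) * RyM (α k)) (x k) (y k)

/-- The Ry-Rz-CZ ansatz of depth `M`:
`R_M · Ladder_CZ · R_{M−1} ⋯ Ladder_CZ · R_0` (`R_0` applied first), with
rotation layer `i` using angles `α i`, `β i`. -/
def ansatzYZ (N : ℕ) (α β : ℕ → Fin N → ℝ) : ℕ → QOp N
  | 0 => rotYZ (α 0) (β 0)
  | (M + 1) => rotYZ (α (M + 1)) (β (M + 1)) * ladderCZ N * ansatzYZ N α β M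

/-- Rotation layer `⊗_{k} Ry(α_k)`. -/
def rotY {N : ℕ} (α : Fin N → ℝ) : QOp N :=
  Matrix.of fun x y => ∏ k : Fin N, RyM (α k) (x k) (y k)

/-- The Ry-CNOT ansatz of depth `M`:
`R_M · Ladder_CNOT · R_{M−1} ⋯ Ladder_CNOT · R_0` (`R_0` applied first). -/
def ansatzY (N : ℕ) (α : ℕ → Fin N → ℝ) : ℕ → QOp N
  | 0 => rotY (α 0)
  | (M + 1) => rotY (α (M + 1)) * ladderCNOT N * ansatzY N α M

/-- Product of CZ gates `CZ_{q,q+1}` (1-based qubits) over all `q` satisfying `P`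
(a diagonal matrix, since all CZ's commute). -/
def czLayer (N : ℕ) (P : ℕ → Prop) [DecidablePred P] : QOp N :=
  Matrix.of fun x y =>
    if x = y then
      ∏ p ∈ Finset.range N,
        (if P (p + 1) ∧ bitAt x p = 1 ∧ bitAt x (p + 1) = 1 then (-1 : ℂ) else 1)
    else 0

/-- Hadamard gates on all 1-based qubits `q` satisfying `P`, identity elsewhere. -/
def hadOn (N : ℕ) (P : ℕ → Prop) [DecidablePred P] : QOp N :=
  Matrix.of fun x y =>
    ∏ k : Fin N, (if P ((k : ℕ) + 1) then HM (x k) (y k) else if x k = y k then (1 : ℂ) else 0)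

/-- The circuit `D_k` (1-based qubits, rightmost factor applied first):
`D_{2i} = (∏_{j=1}^{i−1} CZ_{2j,2j+1}) · (∏_{q=2}^{2i} H_q) · (∏_{j=1}^{i} CZ_{2j−1,2j})`,
`D_{2i+1} = (∏_{j=1}^{i} CZ_{2j,2j+1}) · (∏_{q=2}^{2i+1} H_q) · (∏_{j=1}^{i} CZ_{2j−1,2j})`. -/
def Dgate (N k : ℕ) : QOp N :=
  czLayer N (fun p => p % 2 = 0 ∧ 2 ≤ p ∧ p ≤ k - 1) *
    hadOn N (fun q => 2 ≤ q ∧ q ≤ k) *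
    czLayer N (fun p => p % 2 = 1 ∧ p ≤ k - 1)

/-- `U ⊗ I`: the operator acting as `U` on qubits `1,…,N` and identity on `A` ancilla qubits. -/
def embed (N A : ℕ) (U : QOp N) : QOp (N + A) :=
  Matrix.of fun x y =>
    U (fun i => x (Fin.castAdd A i)) (fun i => y (Fin.castAdd A i)) *
      (if ∀ i : Fin A, x (Fin.natAdd N i) = y (Fin.natAdd N i) then (1 : ℂ) else 0)

end

noncomputable section

namespace AnsatzCNOT

open Matrix

variable {N : ℕ}

/-! ### Local operators -/

/-- Single-qubit operators. -/
abbrev Mat2 := Matrix (ZMod 2) (ZMod 2) ℂ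

/-- The tensor product `⊗_k f k` of one single-qubit operator per qubit. -/
def tens (f : Fin N → Mat2) : QOp N := Matrix.of fun x y => ∏ k, f k (x k) (y k)

lemma zmod2_cases (a : ZMod 2) : a = 0 ∨ a = 1 := by revert a; decide

lemma sum_zmod2 (f : ZMod 2 → ℂ) : ∑ a, f a = f 0 + f 1 := Fin.sum_univ_two f

lemma tens_mul (f g : Fin N → Mat2) : tens f * tens g = tens (f * g) := by
  ext x y
  simp only [tens, Matrix.mul_apply, Matrix.of_apply, Pi.mul_apply, ← Finset.prod_mul_distrib]
  rw [Finset.prod_univ_sum]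
  simp

lemma tens_one : tens (1 : Fin N → Mat2) = 1 := by
  ext x y
  simp only [tens, Matrix.of_apply, Pi.one_apply, Matrix.one_apply]
  by_cases h : x = y
  · simp [h]
  · rw [if_neg h]
    obtain ⟨k, hk⟩ := Function.ne_iff.1 h
    exact Finset.prod_eq_zero (Finset.mem_univ k) (by simp [hk])

lemma tens_conjTranspose (f : Fin N → Mat2) : (tens f)ᴴ = tens (fun k => (f k)ᴴ) := by
  ext x y
  simp [tens, Matrix.conjTranspose_apply]

lemma tens_smul (c : Fin N → ℂ) (f : Fin N → Mat2) :
    tens (fun k => c k • f k) = (∏ k, c k) • tens f := by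
  ext x y
  simp [tens, Finset.prod_mul_distrib]

lemma gate1_eq_tens (A : Mat2) (k : Fin N) : gate1 A k = tens (Pi.mulSingle k A) := by
  ext x y
  simp only [gate1, tens, Matrix.of_apply]
  rw [← Finset.mul_prod_erase _ _ (Finset.mem_univ k)]
  split_ifs with h
  · rw [Finset.prod_eq_one]
    · simp
    · intro j hj
      have := Finset.ne_of_mem_erase hj
      simp [Pi.mulSingle_eq_of_ne this, h j this]
  · push Not at h
    obtain ⟨j, hj, hne⟩ := h
    rw [Finset.prod_eq_zero (Finset.mem_erase.2 ⟨hj, Finset.mem_univ j⟩), mul_zero]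
    simp [Pi.mulSingle_eq_of_ne hj, hne]

lemma gate1_mul (A B : Mat2) (k : Fin N) : gate1 A k * gate1 B k = gate1 (A * B) k := by
  simp only [gate1_eq_tens, tens_mul, Pi.mulSingle_mul]

lemma gate1_comm (A B : Mat2) {k l : Fin N} (h : k ≠ l) :
    gate1 A k * gate1 B l = gate1 B l * gate1 A k := by
  simp only [gate1_eq_tens, tens_mul]
  rw [(Pi.mulSingle_commute (f := fun _ : Fin N => Mat2) h A B).eq]

lemma gate1_one (k : Fin N) : gate1 (1 : Mat2) k = 1 := by
  rw [gate1_eq_tens, Pi.mulSingle_one, tens_one]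

lemma gate1_add (A B : Mat2) (k : Fin N) : gate1 (A + B) k = gate1 A k + gate1 B k := by
  ext x y; simp only [gate1, Matrix.of_apply, Matrix.add_apply]; split_ifs <;> simp

lemma gate1_smul (c : ℂ) (A : Mat2) (k : Fin N) : gate1 (c • A) k = c • gate1 A k := by
  ext x y; simp only [gate1, Matrix.of_apply, Matrix.smul_apply]; split_ifs <;> simp

lemma gate1_conjTranspose (A : Mat2) (k : Fin N) : (gate1 A k)ᴴ = gate1 Aᴴ k := by
  ext x y
  simp only [gate1, Matrix.of_apply, Matrix.conjTranspose_apply]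
  simp only [eq_comm (a := y _)]
  split_ifs <;> simp

/-! ### Pauli operators -/

/-- The character `(-1)^a`. -/
def sgn (a : ZMod 2) : ℂ := if a = 1 then -1 else 1

/-- The Pauli matrix `Z`. -/
def ZM : Mat2 := Matrix.diagonal sgn

/-- Pauli `X` on qubit `k`. -/
def px (k : Fin N) : QOp N := gate1 XM k

/-- Pauli `Z` on qubit `k`. -/
def pz (k : Fin N) : QOp N := gate1 ZM k

/-- Pauli `Y` on qubit `k`, encoded as `i Z X`. -/
def py (k : Fin N) : QOp N := I • (pz k * px k)

lemma mat2_ext {A B : Mat2} (h00 : A 0 0 = B 0 0) (h01 : A 0 1 = B 0 1) (h10 : A 1 0 = B 1 0)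
    (h11 : A 1 1 = B 1 1) : A = B := by
  ext a b
  rcases zmod2_cases a with rfl | rfl <;> rcases zmod2_cases b with rfl | rfl <;> assumption

lemma XM_sq : XM * XM = 1 := by
  apply mat2_ext <;> simp [Matrix.mul_apply, sum_zmod2, XM]

lemma ZM_sq : ZM * ZM = 1 := by
  apply mat2_ext <;> simp [ZM, sgn]

lemma ZX_anti : ZM * XM = (-1 : ℂ) • (XM * ZM) := by
  apply mat2_ext <;> simp [Matrix.mul_apply, sum_zmod2, XM, ZM, sgn]

lemma XM_herm : XMᴴ = XM := by
  apply mat2_ext <;> simp [XM]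

lemma ZM_herm : ZMᴴ = ZM := by
  apply mat2_ext <;> simp [ZM, sgn]

lemma px_sq (k : Fin N) : px k * px k = 1 := by rw [px, gate1_mul, XM_sq, gate1_one]

lemma pz_sq (k : Fin N) : pz k * pz k = 1 := by rw [pz, gate1_mul, ZM_sq, gate1_one]

lemma pz_px (k : Fin N) : pz k * px k = -(px k * pz k) := by
  rw [px, pz, gate1_mul, gate1_mul, ZX_anti, gate1_smul, neg_one_smul]

lemma px_herm (k : Fin N) : (px k)ᴴ = px k := by rw [px, gate1_conjTranspose, XM_herm]

lemma pz_herm (k : Fin N) : (pz k)ᴴ = pz k := by rw [pz, gate1_conjTranspose, ZM_herm]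

lemma pz_apply (k : Fin N) : pz k = Matrix.diagonal fun y : QState N => sgn (y k) := by
  ext x y
  simp only [pz, gate1, ZM, Matrix.of_apply, Matrix.diagonal_apply]
  by_cases h : x = y
  · simp [h]
  · rw [if_neg h]
    split_ifs with h1 h2
    · exact absurd (funext fun j => if hj : j = k then hj ▸ h2 else h1 j hj) h
    · rfl
    · rfl

/-- Flip bit `k`. -/
def flip (k : Fin N) (y : QState N) : QState N := Function.update y k (y k + 1)

lemma px_apply (k : Fin N) (x y : QState N) : px k x y = if x = flip k y then 1 else 0 := by
  simp only [px, gate1, XM, Matrix.of_apply]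
  have key : (∀ j, j ≠ k → x j = y j) ∧ ¬ x k = y k ↔ x = flip k y := by
    have h2 : ∀ a b : ZMod 2, ¬ a = b ↔ a = b + 1 := by decide
    rw [flip, Function.eq_update_iff, h2, and_comm]
  rw [← if_congr key rfl rfl]
  rw [ite_and]
  split_ifs <;> rfl

/-! ### The ladder and its action on Pauli operators -/

/-- The eigenvalue of the ladder on a computational basis state. -/
def ladderSign (N : ℕ) (x : QState N) : ℂ :=
  ∏ k ∈ Finset.range (N - 1), (if bitAt x k = 1 ∧ bitAt x (k + 1) = 1 then (-1 : ℂ) else 1)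

lemma ladder_eq : ladderCZ N = Matrix.diagonal (ladderSign N) := by
  ext x y
  simp only [ladderCZ, Matrix.of_apply, Matrix.diagonal_apply]
  rfl

lemma ladderSign_sq (x : QState N) : ladderSign N x * ladderSign N x = 1 := by
  rw [ladderSign, ← Finset.prod_mul_distrib]
  apply Finset.prod_eq_one
  intro k _
  split_ifs <;> simp

lemma ladderSign_star (x : QState N) : star (ladderSign N x) = ladderSign N x := by
  rw [ladderSign, star_prod]
  apply Finset.prod_congr rfl
  intro k _
  split_ifs <;> simp

lemma ladder_sq : ladderCZ N * ladderCZ N = 1 := by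
  rw [ladder_eq, Matrix.diagonal_mul_diagonal]
  simp [ladderSign_sq]

lemma ladder_herm : (ladderCZ N)ᴴ = ladderCZ N := by
  rw [ladder_eq, Matrix.diagonal_conjTranspose]
  congr 1
  funext x
  exact ladderSign_star x

lemma bitAt_flip (j : Fin N) (y : QState N) (n : ℕ) :
    bitAt (flip j y) n = if n = j then bitAt y n + 1 else bitAt y n := by
  unfold bitAt flip
  split_ifs with h h1 h1
  · subst h1; simp
  · exact Function.update_of_ne (by rintro rfl; simp at h1) _ _
  · exact absurd (h1 ▸ j.2) h
  · rfl

/-- Flipping bit `j` changes the ladder phase by the parity of the neighbours of `j`. -/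
lemma ladderSign_flip (j : Fin N) (y : QState N) :
    ladderSign N (flip j y) = ladderSign N y * sgn (bitAt y (j + 1)) *
      (if (j : ℕ) = 0 then 1 else sgn (bitAt y (j - 1))) := by
  have step : ∀ k ∈ Finset.range (N - 1),
      (if bitAt (flip j y) k = 1 ∧ bitAt (flip j y) (k + 1) = 1 then (-1 : ℂ) else 1) =
      (if bitAt y k = 1 ∧ bitAt y (k + 1) = 1 then (-1 : ℂ) else 1) *
        (if k = (j : ℕ) then sgn (bitAt y (j + 1)) else 1) *
        (if k + 1 = (j : ℕ) then sgn (bitAt y (j - 1)) else 1) := by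
    intro k _
    rw [bitAt_flip, bitAt_flip]
    by_cases h1 : k = (j : ℕ)
    · subst h1
      rcases zmod2_cases (bitAt y j) with h | h <;>
        rcases zmod2_cases (bitAt y (j + 1)) with h' | h' <;> simp [sgn, h, h']
    · by_cases h2 : k + 1 = (j : ℕ)
      · rw [← h2, Nat.add_sub_cancel]
        rcases zmod2_cases (bitAt y k) with h | h <;>
          rcases zmod2_cases (bitAt y (k + 1)) with h' | h' <;> simp [sgn, h, h']
      · simp [h1, h2]
  rw [ladderSign, Finset.prod_congr rfl step, Finset.prod_mul_distrib, Finset.prod_mul_distrib]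
  congr 1
  · congr 1
    rw [Finset.prod_ite_eq']
    split_ifs with h
    · rfl
    · have : ¬ ((j : ℕ) + 1 < N) := by
        rw [Finset.mem_range] at h; omega
      simp [bitAt, this, sgn]
  · split_ifs with h
    · exact Finset.prod_eq_one fun k _ => if_neg (by omega)
    · rw [Finset.prod_eq_single ((j : ℕ) - 1)]
      · rw [if_pos (by omega)]
      · intro b _ hb; exact if_neg (by omega)
      · intro hb; exact absurd (Finset.mem_range.2 (by omega)) hb

lemma ladder_conj_apply (P : QOp N) (x y : QState N) :
    (ladderCZ N * P * ladderCZ N) x y = ladderSign N x * P x y * ladderSign N y := by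
  rw [ladder_eq, Matrix.mul_diagonal, Matrix.diagonal_mul]

lemma ladder_conj_px_zero (i j : Fin N) (hi : (i : ℕ) = 0) (hj : (j : ℕ) = 1) :
    ladderCZ N * px i * ladderCZ N = px i * pz j := by
  ext x y
  rw [ladder_conj_apply, pz_apply, Matrix.mul_diagonal, px_apply]
  split_ifs with h
  · have hb : bitAt y 1 = y j := by
      rw [bitAt, dif_pos (hj ▸ j.2)]; congr 1; exact Fin.ext hj.symm
    rw [h, ladderSign_flip, hi, zero_add, hb]
    have := ladderSign_sq y
    simp only [if_true]
    linear_combination sgn (y j) * this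
  · simp

/-- One step of the glider: `Z_i X_j ↦ X_j Z_k` for consecutive qubits `i, j, k`; the ladder
creates a second `Z_i`, which cancels the first one. -/
lemma ladder_conj_pz_px (i j k : Fin N) (hj : (j : ℕ) = i + 1) (hk : (k : ℕ) = j + 1) :
    ladderCZ N * (pz i * px j) * ladderCZ N = px j * pz k := by
  have hij : i ≠ j := by intro h; rw [h] at hj; omega
  ext x y
  rw [ladder_conj_apply, pz_apply, pz_apply, Matrix.mul_diagonal, Matrix.diagonal_mul, px_apply]
  split_ifs with h
  · have hb : bitAt y (j + 1) = y k := by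
      rw [bitAt, dif_pos (hk ▸ k.2)]; congr 1; exact Fin.ext hk.symm
    have hb' : bitAt y (j - 1) = y i := by
      have : (j : ℕ) - 1 = i := by omega
      rw [this, bitAt, dif_pos i.2]
    have hx : x i = y i := by rw [h, flip, Function.update_of_ne hij]
    rw [hx, h, ladderSign_flip, hb, hb', if_neg (by omega)]
    have := ladderSign_sq y
    have hs : sgn (y i) * sgn (y i) = 1 := by unfold sgn; split_ifs <;> simp
    linear_combination sgn (y k) * (sgn (y i) * sgn (y i)) * this + sgn (y k) * hs
  · simp

/-! ### Circuits with arbitrary local layers -/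

/-- `Circ m U`: the operator `U` is a product of `m` ladders alternating with `m + 1` layers of
arbitrary single-qubit unitaries. -/
inductive Circ : ℕ → QOp N → Prop
  | base (f : Fin N → Mat2) (hf : ∀ k, f k ∈ unitaryGroup (ZMod 2) ℂ) : Circ 0 (tens f)
  | step (f : Fin N → Mat2) (hf : ∀ k, f k ∈ unitaryGroup (ZMod 2) ℂ) {m : ℕ} {V : QOp N}
      (hV : Circ m V) : Circ (m + 1) (tens f * ladderCZ N * V)

lemma Circ.local_mul {b : ℕ} {V : QOp N} (hV : Circ b V) (f : Fin N → Mat2)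
    (hf : ∀ k, f k ∈ unitaryGroup (ZMod 2) ℂ) : Circ b (tens f * V) := by
  cases hV with
  | base g hg =>
    rw [tens_mul]
    exact Circ.base _ fun k => mul_mem (hf k) (hg k)
  | step g hg hV =>
    rw [← mul_assoc, ← mul_assoc, tens_mul]
    exact Circ.step _ (fun k => mul_mem (hf k) (hg k)) hV

lemma Circ.mul {a b : ℕ} {U V : QOp N} (hU : Circ a U) (hV : Circ b V) :
    Circ (a + b) (U * V) := by
  induction hU with
  | base f hf => rw [zero_add]; exact hV.local_mul f hf
  | step f hf _ ih => rw [mul_assoc, Nat.add_right_comm]; exact Circ.step f hf ih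

lemma one_mem_local (k : Fin N) : (1 : Fin N → Mat2) k ∈ unitaryGroup (ZMod 2) ℂ := one_mem _

lemma Circ.ladder : Circ 1 (ladderCZ N) := by
  have := Circ.step (1 : Fin N → Mat2) one_mem_local (Circ.base (1 : Fin N → Mat2) one_mem_local)
  simpa [tens_one] using this

lemma Circ.conjTranspose {a : ℕ} {U : QOp N} (hU : Circ a U) : Circ a Uᴴ := by
  induction hU with
  | base f hf =>
    rw [tens_conjTranspose]
    exact Circ.base _ fun k => Unitary.star_mem (hf k)
  | step f hf _ ih =>
    rw [Matrix.conjTranspose_mul, Matrix.conjTranspose_mul, ladder_herm, tens_conjTranspose,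
      ← mul_assoc]
    exact (ih.mul Circ.ladder).mul (Circ.base _ fun k => Unitary.star_mem (hf k))

/-! ### Pauli rotations -/

/-- The quarter rotation `exp(iπ/4 · P) = (1 + iP)/√2` generated by an involution `P`. -/
def rot {n : Type*} [DecidableEq n] (P : Matrix n n ℂ) : Matrix n n ℂ :=
  (((Real.sqrt 2)⁻¹ : ℝ) : ℂ) • (1 + I • P)

lemma sqrt2_inv_sq : (((Real.sqrt 2)⁻¹ : ℝ) : ℂ) * (((Real.sqrt 2)⁻¹ : ℝ) : ℂ) = 1 / 2 := by
  rw [← Complex.ofReal_mul, ← mul_inv, Real.mul_self_sqrt (by norm_num)]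
  norm_num

lemma rot_conjTranspose {n : Type*} [DecidableEq n] {P : Matrix n n ℂ} (hP : Pᴴ = P) :
    (rot P)ᴴ = rot (-P) := by
  simp [rot, Matrix.conjTranspose_smul, hP]

lemma rot_neg_mul {n : Type*} [Fintype n] [DecidableEq n] {P : Matrix n n ℂ} (h : P * P = 1) :
    rot (-P) * rot P = 1 := by
  have : (1 + I • -P) * (1 + I • P) = (2 : ℂ) • 1 := by
    simp only [mul_add, add_mul, smul_mul_assoc, mul_smul_comm, smul_smul, I_mul_I, one_mul,
      mul_one, h, smul_neg, neg_mul, smul_add]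
    module
  rw [rot, rot, smul_mul_smul_comm, this, sqrt2_inv_sq, smul_smul]
  norm_num

/-- Conjugation commutes with passing to the quarter rotation. -/
lemma conj_rot {n : Type*} [Fintype n] [DecidableEq n] {U V : Matrix n n ℂ} (h : U * V = 1)
    (P : Matrix n n ℂ) : U * rot P * V = rot (U * P * V) := by
  simp [rot, mul_add, add_mul, h]

/-- Conjugation by the rotation of `P` multiplies an anticommuting `Q` by `iP`. -/
lemma rot_conj {n : Type*} [Fintype n] [DecidableEq n] {P Q : Matrix n n ℂ} (h : P * P = 1)
    (hPQ : P * Q = -(Q * P)) : rot P * Q * rot (-P) = I • (P * Q) := by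
  have hQP : Q * P = -(P * Q) := by rw [hPQ, neg_neg]
  have : (1 + I • P) * Q * (1 + I • -P) = (2 : ℂ) • I • (P * Q) := by
    simp only [mul_add, add_mul, smul_mul_assoc, mul_smul_comm, smul_smul, one_mul,
      mul_one, mul_neg, smul_neg, mul_assoc, hQP]
    rw [← mul_assoc P P Q, h, one_mul]
    simp only [smul_neg, smul_add, smul_smul, I_mul_I]
    module
  rw [rot, rot, smul_mul_assoc, smul_mul_smul_comm, this, sqrt2_inv_sq, smul_smul]
  norm_num

/-- `Gen m P`: the operator `P` is a Hermitian involution whose quarter rotation is realised by a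
circuit with `m` ladders. -/
structure Gen (m : ℕ) (P : QOp N) : Prop where
  herm : Pᴴ = P
  sq : P * P = 1
  circ : Circ m (rot P)

lemma Gen.neg {m : ℕ} {P : QOp N} (h : Gen m P) : Gen m (-P) where
  herm := by rw [Matrix.conjTranspose_neg, h.herm]
  sq := by rw [neg_mul_neg, h.sq]
  circ := by rw [← rot_conjTranspose h.herm]; exact h.circ.conjTranspose

lemma Gen.ladder_conj {m : ℕ} {P : QOp N} (h : Gen m P) :
    Gen (m + 2) (ladderCZ N * P * ladderCZ N) where
  herm := by simp only [Matrix.conjTranspose_mul, ladder_herm, h.herm, mul_assoc]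
  sq := by
    calc ladderCZ N * P * ladderCZ N * (ladderCZ N * P * ladderCZ N)
        = ladderCZ N * P * (ladderCZ N * ladderCZ N) * P * ladderCZ N := by simp only [mul_assoc]
      _ = 1 := by rw [ladder_sq, mul_one, mul_assoc _ P P, h.sq, mul_one, ladder_sq]
  circ := by
    rw [← conj_rot ladder_sq]
    have := (Circ.ladder.mul h.circ).mul Circ.ladder
    rwa [show 1 + m + 1 = m + 2 by omega] at this

/-- The commutator rule: anticommuting generators `P`, `Q` produce the generator `iPQ`. -/
lemma Gen.comm {a b : ℕ} {P Q R : QOp N} (hP : Gen a P) (hQ : Gen b Q)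
    (hPQ : P * Q = -(Q * P)) (hR : I • (P * Q) = R) : Gen (2 * a + b) R := by
  subst hR
  refine ⟨?_, ?_, ?_⟩
  · rw [Matrix.conjTranspose_smul, Matrix.conjTranspose_mul, hP.herm, hQ.herm, hPQ]
    simp
  · rw [smul_mul_smul_comm, I_mul_I]
    have : P * Q * (P * Q) = -1 := by
      calc P * Q * (P * Q) = -(Q * P) * (P * Q) := by rw [← hPQ]
        _ = -(Q * (P * P) * Q) := by simp only [mul_assoc, neg_mul]
        _ = -1 := by rw [hP.sq, mul_one, hQ.sq]
    rw [this]; simp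
  · have h1 : rot P * rot (-P) = 1 := by
      have := rot_neg_mul (P := -P) (by rw [neg_mul_neg, hP.sq])
      rwa [neg_neg] at this
    rw [← rot_conj hP.sq hPQ, ← conj_rot h1]
    have := (hP.circ.mul hQ.circ).mul hP.neg.circ
    rwa [show a + b + a = 2 * a + b by omega] at this

lemma rot_mem_unitary {A : Mat2} (hh : Aᴴ = A) (hs : A * A = 1) :
    rot A ∈ unitaryGroup (ZMod 2) ℂ := by
  rw [mem_unitaryGroup_iff', star_eq_conjTranspose, rot_conjTranspose hh, rot_neg_mul hs]

lemma gen_gate1 {A : Mat2} (hh : Aᴴ = A) (hs : A * A = 1) (k : Fin N) : Gen 0 (gate1 A k) where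
  herm := by rw [gate1_conjTranspose, hh]
  sq := by rw [gate1_mul, hs, gate1_one]
  circ := by
    have : rot (gate1 A k) = tens (Pi.mulSingle k (rot A)) := by
      rw [← gate1_eq_tens, rot, rot, gate1_smul, gate1_add, gate1_smul, gate1_one]
    rw [this]
    refine Circ.base _ fun j => ?_
    by_cases hj : j = k
    · subst hj; rw [Pi.mulSingle_eq_same]; exact rot_mem_unitary hh hs
    · rw [Pi.mulSingle_eq_of_ne hj]; exact one_mem _

lemma gen_px (k : Fin N) : Gen 0 (px k) := gen_gate1 XM_herm XM_sq k

lemma gen_pz (k : Fin N) : Gen 0 (pz k) := gen_gate1 ZM_herm ZM_sq k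

/-! ### Changing the Pauli operator on one qubit -/

lemma smul_I_I (P : QOp N) : I • I • P = -P := by rw [smul_smul, I_mul_I, neg_one_smul]

lemma Gen.x_to_y {m : ℕ} {C : QOp N} {j : Fin N} (hz : C * pz j = pz j * C)
    (h : Gen m (C * px j)) : Gen m (C * py j) := by
  have := (gen_pz j).comm h (R := C * py j)
    (by rw [← mul_assoc, ← hz, mul_assoc, pz_px, mul_neg, mul_assoc])
    (by rw [py, mul_smul_comm, ← mul_assoc, ← mul_assoc, hz])
  simpa using this

lemma Gen.z_to_y {m : ℕ} {C : QOp N} {j : Fin N} (hx : C * px j = px j * C)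
    (h : Gen m (C * pz j)) : Gen m (C * py j) := by
  have := ((gen_px j).comm h (R := -(C * py j))
    (by rw [← mul_assoc, ← hx, mul_assoc, mul_assoc, pz_px, mul_neg, neg_neg])
    (by rw [py, mul_smul_comm, pz_px, mul_neg, smul_neg, neg_neg, ← mul_assoc, ← mul_assoc,
      hx])).neg
  simpa using this

lemma Gen.y_to_z {m : ℕ} {C : QOp N} {j : Fin N} (hx : C * px j = px j * C)
    (h : Gen m (C * py j)) : Gen m (C * pz j) := by
  have e : px j * py j = -(py j * px j) := by
    rw [py, mul_smul_comm, smul_mul_assoc, ← mul_assoc, pz_px, neg_mul, smul_neg, neg_neg]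
  have := (gen_px j).comm h (R := C * pz j)
    (by rw [← mul_assoc, ← hx, mul_assoc, mul_assoc, e, mul_neg])
    (by rw [← mul_assoc, ← hx, mul_assoc, e, py, smul_mul_assoc, mul_assoc, px_sq, mul_one,
      mul_neg, smul_neg, mul_smul_comm, smul_I_I, neg_neg])
  simpa using this

lemma Gen.y_to_x {m : ℕ} {C : QOp N} {j : Fin N} (hz : C * pz j = pz j * C)
    (h : Gen m (C * py j)) : Gen m (C * px j) := by
  have e : pz j * py j = I • px j := by rw [py, mul_smul_comm, ← mul_assoc, pz_sq, one_mul]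
  have e' : py j * pz j = -(I • px j) := by
    rw [py, smul_mul_assoc, pz_px, neg_mul, mul_assoc, pz_sq, mul_one, smul_neg]
  have := ((gen_pz j).comm h (R := -(C * px j))
    (by rw [← mul_assoc, ← hz, mul_assoc, mul_assoc, e, e', mul_neg, neg_neg])
    (by rw [← mul_assoc, ← hz, mul_assoc, e, mul_smul_comm, smul_I_I])).neg
  simpa using this

/-! ### Generators on two qubits -/

lemma px_px {i j : Fin N} (h : i ≠ j) : px i * px j = px j * px i := gate1_comm _ _ h
lemma px_pz {i j : Fin N} (h : i ≠ j) : px i * pz j = pz j * px i := gate1_comm _ _ h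
lemma pz_pz {i j : Fin N} (h : i ≠ j) : pz i * pz j = pz j * pz i := gate1_comm _ _ h

lemma Gen.xz_to_zx {m : ℕ} {i j : Fin N} (hij : i ≠ j) (h : Gen m (px i * pz j)) :
    Gen m (pz i * px j) := by
  have h1 := (h.z_to_y (px_px hij)).y_to_x (px_pz hij)
  rw [px_px hij] at h1
  have h2 := (h1.x_to_y (px_pz hij.symm)).y_to_z (px_px hij.symm)
  rwa [px_pz hij.symm] at h2

/-- The glider: conjugating `X` on the first qubit alternately by the ladder and by local layers
moves it along the chain as a nearest-neighbour operator. -/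
lemma gen_neighbour (j : ℕ) (hj : j + 1 < N) :
    Gen (2 * (j + 1)) (px (⟨j, by omega⟩ : Fin N) * pz ⟨j + 1, hj⟩) := by
  induction j with
  | zero =>
    rw [← ladder_conj_px_zero ⟨0, by omega⟩ ⟨0 + 1, hj⟩ rfl rfl]
    exact (gen_px _).ladder_conj
  | succ j ih =>
    have h := (ih (by omega)).xz_to_zx (by simp)
    rw [← ladder_conj_pz_px ⟨j, by omega⟩ ⟨j + 1, by omega⟩ ⟨j + 1 + 1, hj⟩ rfl rfl]
    exact h.ladder_conj

lemma py_sq (k : Fin N) : py k * py k = 1 := by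
  rw [py, smul_mul_smul_comm, I_mul_I, ← mul_assoc, mul_assoc (pz k),
    ← neg_eq_iff_eq_neg.2 (pz_px k), mul_neg, neg_mul, ← mul_assoc, pz_sq, one_mul, px_sq]
  simp

lemma px_py {i j : Fin N} (h : i ≠ j) : px i * py j = py j * px i := by
  rw [py, mul_smul_comm, smul_mul_assoc, ← mul_assoc, px_pz h, mul_assoc, px_px h, mul_assoc]

lemma pz_py {i j : Fin N} (h : i ≠ j) : pz i * py j = py j * pz i := by
  rw [py, mul_smul_comm, smul_mul_assoc, ← mul_assoc, pz_pz h, mul_assoc, ← px_pz h.symm,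
    mul_assoc]

/-- Moving the far end of `Z_k X_l` one site along, to `Z_k X_{l'}`, by two commutators with
generators on the pair `l, l'`. -/
lemma Gen.hop {m n : ℕ} {k l l' : Fin N} (hkl : k ≠ l) (hkl' : k ≠ l') (hll : l ≠ l')
    (hn : Gen n (px l * pz l')) (h : Gen m (pz k * px l)) :
    Gen (m + 4 * n) (pz k * px l') := by
  have n1 : Gen n (pz l * px l') := hn.xz_to_zx hll
  have n2 : Gen n (pz l' * py l) := by
    rw [px_pz hll] at hn
    exact hn.x_to_y (pz_pz hll.symm)
  -- `i (Z_l X_{l'}) (Z_k X_l) = Z_k X_{l'} Y_l`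
  have h1 : Gen (2 * n + m) (pz k * px l' * py l) := by
    have a1 : pz l * px l' * (pz k * px l) = pz k * px l' * (pz l * px l) := by
      calc pz l * px l' * (pz k * px l) = pz l * (px l' * pz k) * px l := by simp only [mul_assoc]
        _ = pz l * pz k * px l' * px l := by rw [px_pz hkl'.symm]; simp only [mul_assoc]
        _ = pz k * (pz l * px l') * px l := by rw [pz_pz hkl.symm]; simp only [mul_assoc]
        _ = pz k * px l' * (pz l * px l) := by rw [← px_pz hll.symm]; simp only [mul_assoc]
    have a2 : pz k * px l * (pz l * px l') = pz k * px l' * (px l * pz l) := by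
      calc pz k * px l * (pz l * px l') = pz k * px l * (px l' * pz l) := by rw [px_pz hll.symm]
        _ = pz k * (px l * px l') * pz l := by simp only [mul_assoc]
        _ = pz k * px l' * (px l * pz l) := by rw [px_px hll]; simp only [mul_assoc]
    refine n1.comm h ?_ ?_
    · rw [a1, a2, pz_px, mul_neg]
    · rw [a1, py, mul_smul_comm]
  -- `i (Z_{l'} Y_l) (Z_k X_{l'} Y_l) = Z_k Y_{l'}`
  have h2 : Gen (2 * n + (2 * n + m)) (pz k * py l') := by
    have b1 : pz l' * py l * (pz k * px l' * py l) = pz k * (pz l' * px l') := by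
      rw [mul_assoc, ← mul_assoc (py l), ← mul_assoc (py l), ← pz_py hkl, mul_assoc (pz k),
        ← px_py hll.symm, mul_assoc, mul_assoc, py_sq, mul_one, ← mul_assoc, pz_pz hkl'.symm,
        mul_assoc]
    have b2 : pz k * px l' * py l * (pz l' * py l) = pz k * (px l' * pz l') := by
      rw [mul_assoc, pz_py hll.symm, ← mul_assoc (py l), py_sq, one_mul, mul_assoc]
    refine n2.comm h1 ?_ ?_
    · rw [b1, b2, pz_px, mul_neg]
    · rw [b1, py, mul_smul_comm]
  rw [show m + 4 * n = 2 * n + (2 * n + m) by omega]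
  exact h2.y_to_x (pz_pz hkl')

/-- The generator `Z_k X_l` for `k < l`, with quadratic cost. -/
lemma gen_far (k d : ℕ) (h : k + 1 + d < N) :
    ∃ m, m ≤ 2 * N + 8 * N * d ∧
      Gen m (pz (⟨k, by omega⟩ : Fin N) * px ⟨k + 1 + d, h⟩) := by
  induction d with
  | zero => exact ⟨_, by omega, (gen_neighbour k h).xz_to_zx (by simp)⟩
  | succ d ih =>
    obtain ⟨m, hm, hg⟩ := ih (by omega)
    refine ⟨_, ?_, Gen.hop (by simp; omega) (by simp; omega) (by simp)
      (gen_neighbour (k + 1 + d) h) hg⟩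
    nlinarith

lemma gen_zx (k l : Fin N) (hkl : k ≠ l) : ∃ m, m ≤ 8 * N * N ∧ Gen m (pz k * px l) := by
  have key : ∀ a b : Fin N, a < b → ∃ m, m ≤ 8 * N * N ∧ Gen m (pz a * px b) := by
    rintro ⟨a, ha⟩ ⟨b, hb⟩ hab
    rw [Fin.mk_lt_mk] at hab
    obtain ⟨d, rfl⟩ := Nat.exists_eq_add_of_le hab
    obtain ⟨m, hm, hg⟩ := gen_far a d hb
    exact ⟨m, by nlinarith, hg⟩
  rcases lt_or_gt_of_ne hkl with h | h
  · exact key k l h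
  · obtain ⟨m, hm, hg⟩ := key l k h
    refine ⟨m, hm, ?_⟩
    rw [← px_pz hkl] at hg
    exact hg.xz_to_zx hkl

/-! ### From arbitrary local layers to `Ry`-`Rz` layers -/

lemma polar (z : ℂ) : ∃ t : ℝ, z = (‖z‖ : ℂ) * cexp (t * I) :=
  ⟨z.arg, (Complex.norm_mul_exp_arg_mul_I z).symm⟩

/-- Every unitary `2 × 2` matrix is `e^{iφ} Rz(a) Ry(b) Rz(c)`. -/
lemma euler {U : Mat2} (hU : U ∈ unitaryGroup (ZMod 2) ℂ) :
    ∃ φ a b c : ℝ, U = cexp (φ * I) • (RzM a * RyM b * RzM c) := by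
  have h1 := mem_unitaryGroup_iff.1 hU
  have h2 := mem_unitaryGroup_iff'.1 hU
  have e (i j : ZMod 2) : U i 0 * star (U j 0) + U i 1 * star (U j 1) = (1 : Mat2) i j := by
    rw [← h1, Matrix.mul_apply, sum_zmod2]; rfl
  have e' (i j : ZMod 2) : star (U 0 i) * U 0 j + star (U 1 i) * U 1 j = (1 : Mat2) i j := by
    rw [← h2, Matrix.mul_apply, sum_zmod2]; rfl
  have r00 := e 0 0
  have r01 := e 0 1
  have r11 := e 1 1
  have c00 := e' 0 0
  simp only [Matrix.one_apply_eq, Matrix.one_apply_ne (zero_ne_one : (0 : ZMod 2) ≠ 1)]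
    at r00 r01 r11 c00
  have r10 : U 1 0 * star (U 0 0) + U 1 1 * star (U 0 1) = 0 := by
    rw [e 1 0, Matrix.one_apply_ne one_ne_zero]
  clear e e' h1 h2
  generalize hp : U 0 0 = p at *
  generalize hq : U 0 1 = q at *
  generalize hr : U 1 0 = r at *
  generalize hs : U 1 1 = s at *
  -- The second column is determined by the first one and the determinant.
  set D := p * s - q * r with hD
  have hs' : s = D * star p := by linear_combination (-s) * r00 + q * r10
  have hq' : q = -(D * star r) := by linear_combination (-q) * r11 + s * r01
  have hDD : D * star D = 1 := by
    have : star D = star p * star s - star q * star r := by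
      rw [hD, star_sub, star_mul', star_mul']
    have hs2 : s * star s + q * star q = 1 := by
      linear_combination (1 : ℂ) * r00 + r11 - c00
    rw [this]
    linear_combination (star s) * (-hs') + (star q) * (-hq') + hs2
  have hDn : ‖D‖ = 1 := by
    have : ‖D‖ * ‖D‖ = 1 := by
      nth_rewrite 2 [← norm_star D]
      rw [← norm_mul, hDD, norm_one]
    nlinarith [norm_nonneg D]
  obtain ⟨A, hA⟩ := polar p
  obtain ⟨B, hB⟩ := polar r
  obtain ⟨C, hC⟩ := polar D
  rw [hDn, Complex.ofReal_one, one_mul] at hC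
  have hn : ‖p‖ ^ 2 + ‖r‖ ^ 2 = 1 := by
    have h3 : ((‖p‖ ^ 2 + ‖r‖ ^ 2 : ℝ) : ℂ) = 1 := by
      push_cast
      rw [← Complex.mul_conj', ← Complex.mul_conj', ← c00]
      simp only [Complex.star_def]
      ring
    exact_mod_cast h3
  obtain ⟨θ, hcos, hsin⟩ : ∃ θ : ℝ, Real.cos θ = ‖p‖ ∧ Real.sin θ = ‖r‖ := by
    refine ⟨Real.arccos ‖p‖, Real.cos_arccos (by linarith [norm_nonneg p])
      (by nlinarith [norm_nonneg p, norm_nonneg r]), ?_⟩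
    rw [Real.sin_arccos, show 1 - ‖p‖ ^ 2 = ‖r‖ ^ 2 by linarith, Real.sqrt_sq (norm_nonneg r)]
  rw [← hcos] at hA
  rw [← hsin] at hB
  have star_e (t : ℝ) : star (cexp (t * I)) = cexp (-t * I) := by
    rw [Complex.star_def, ← Complex.exp_conj]; simp
  have star_r (t : ℝ) : star (t : ℂ) = t := Complex.conj_ofReal t
  have hs3 : s = cexp (C * I) * ((Real.cos θ : ℂ) * cexp (-A * I)) := by
    rw [hs', hC, hA, star_mul', star_e, star_r]
  have hq3 : q = -(cexp (C * I) * ((Real.sin θ : ℂ) * cexp (-B * I))) := by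
    rw [hq', hC, hB, star_mul', star_e, star_r]
  refine ⟨C / 2, B - A, 2 * θ, C - A - B, ?_⟩
  have hθ : 2 * θ / 2 = θ := by ring
  have e3 (x y z v : ℂ) : cexp x * (cexp y * v * cexp z) = v * cexp (x + y + z) := by
    rw [Complex.exp_add, Complex.exp_add]; ring
  have e2 (x y v : ℂ) : cexp x * (v * cexp y) = v * cexp (x + y) := by
    rw [Complex.exp_add]; ring
  apply mat2_ext <;>
    simp only [RzM, RyM, Matrix.smul_apply, Matrix.mul_apply, sum_zmod2, Matrix.of_apply, hθ,
      if_true, if_false, one_ne_zero, zero_ne_one, mul_zero, zero_mul, add_zero, zero_add,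
      smul_eq_mul]
  · rw [hp, hA, e3]
    congr 2
    push_cast; ring
  · rw [hq, hq3, e2, e3, neg_mul (Real.sin θ : ℂ)]
    congr 3
    push_cast; ring
  · rw [hr, hB, e3]
    congr 2
    push_cast; ring
  · rw [hs, hs3, e2, e3]
    congr 2
    push_cast; ring

lemma RzM_unitary (t : ℝ) : RzM t ∈ unitaryGroup (ZMod 2) ℂ := by
  rw [mem_unitaryGroup_iff]
  have h (s : ℝ) : cexp (s * I) * star (cexp (s * I)) = 1 := by
    rw [Complex.star_def, ← Complex.exp_conj, ← Complex.exp_add]; simp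
  have h1 := h (t / 2)
  have h2 := h (-(t / 2))
  push_cast at h1 h2
  apply mat2_ext <;>
    simp only [Matrix.mul_apply, sum_zmod2, Matrix.star_apply, RzM, Matrix.of_apply, if_true,
      if_false, one_ne_zero, zero_ne_one, mul_zero, zero_mul, add_zero, zero_add, star_zero,
      Matrix.one_apply, Complex.ofReal_div, Complex.ofReal_ofNat, h1, h2]

lemma RyM_unitary (t : ℝ) : RyM t ∈ unitaryGroup (ZMod 2) ℂ := by
  rw [mem_unitaryGroup_iff]
  have h : ((Real.cos (t / 2) : ℝ) : ℂ) ^ 2 + ((Real.sin (t / 2) : ℝ) : ℂ) ^ 2 = 1 := by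
    exact_mod_cast Real.cos_sq_add_sin_sq (t / 2)
  have sr (t : ℝ) : star (t : ℂ) = t := Complex.conj_ofReal t
  apply mat2_ext <;>
    simp only [Matrix.mul_apply, sum_zmod2, Matrix.star_apply, RyM, Matrix.of_apply, if_true,
      if_false, one_ne_zero, zero_ne_one, star_neg, Matrix.one_apply, sr]
  · linear_combination h
  · ring
  · ring
  · linear_combination h

/-- Euler decomposition of a whole local layer. -/
lemma euler_layer (f : Fin N → Mat2) (hf : ∀ k, f k ∈ unitaryGroup (ZMod 2) ℂ) :
    ∃ (φ : ℝ) (a b c : Fin N → ℝ),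
      tens f = cexp (φ * I) • (rotYZ b a * tens fun k => RzM (c k)) := by
  choose φ a b c h using fun k => euler (hf k)
  refine ⟨∑ k, φ k, a, b, c, ?_⟩
  have : f = fun k => cexp (φ k * I) • (RzM (a k) * RyM (b k) * RzM (c k)) := funext h
  rw [this, tens_smul, ← Complex.exp_sum, ← Finset.sum_mul, ← Complex.ofReal_sum]
  congr 1
  exact (tens_mul _ _).symm

lemma tens_RzM_comm (c : Fin N → ℝ) :
    (tens fun k => RzM (c k)) * ladderCZ N = ladderCZ N * tens fun k => RzM (c k) := by
  have : (tens fun k => RzM (c k)) =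
      Matrix.diagonal fun x : QState N => ∏ k, RzM (c k) (x k) (x k) := by
    ext x y
    simp only [tens, Matrix.of_apply, Matrix.diagonal_apply]
    split_ifs with h
    · rw [h]
    · obtain ⟨k, hk⟩ := Function.ne_iff.1 h
      exact Finset.prod_eq_zero (Finset.mem_univ k) (by simp [RzM, hk])
  rw [this, ladder_eq, Matrix.diagonal_mul_diagonal, Matrix.diagonal_mul_diagonal]
  congr 1
  funext x
  ring

/-- `Ans m U`: up to a global phase, `U` is an `Ry`-`Rz`-`CZ` ansatz circuit of depth `m`. -/
def Ans (m : ℕ) (U : QOp N) : Prop :=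
  ∃ (α β : ℕ → Fin N → ℝ) (φ : ℝ), U = cexp (φ * I) • ansatzYZ N α β m

lemma ansatz_congr (α β α' β' : ℕ → Fin N → ℝ) (m : ℕ) (hα : ∀ i ≤ m, α i = α' i)
    (hβ : ∀ i ≤ m, β i = β' i) : ansatzYZ N α β m = ansatzYZ N α' β' m := by
  induction m with
  | zero => rw [ansatzYZ, ansatzYZ, hα 0 le_rfl, hβ 0 le_rfl]
  | succ m ih =>
    rw [ansatzYZ, ansatzYZ, hα _ le_rfl, hβ _ le_rfl,
      ih (fun i hi => hα i (by omega)) (fun i hi => hβ i (by omega))]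

lemma Ans.base (a b : Fin N → ℝ) : Ans 0 (rotYZ a b) :=
  ⟨fun _ => a, fun _ => b, 0, by simp [ansatzYZ]⟩

lemma Ans.step {m : ℕ} {V : QOp N} (h : Ans m V) (a b : Fin N → ℝ) :
    Ans (m + 1) (rotYZ a b * ladderCZ N * V) := by
  obtain ⟨α, β, φ, rfl⟩ := h
  refine ⟨Function.update α (m + 1) a, Function.update β (m + 1) b, φ, ?_⟩
  rw [ansatzYZ, Function.update_self, Function.update_self, mul_smul_comm,
    ansatz_congr α β (Function.update α (m + 1) a) (Function.update β (m + 1) b) m]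
  · intro i hi; rw [Function.update_of_ne (by omega)]
  · intro i hi; rw [Function.update_of_ne (by omega)]

lemma Ans.phase {m : ℕ} {V : QOp N} (h : Ans m V) (t : ℝ) : Ans m (cexp (t * I) • V) := by
  obtain ⟨α, β, φ, rfl⟩ := h
  refine ⟨α, β, t + φ, ?_⟩
  rw [smul_smul, ← Complex.exp_add]
  congr 2
  push_cast; ring

lemma RyM_zero : RyM 0 = 1 := by
  apply mat2_ext <;> simp [RyM]

lemma RzM_zero : RzM 0 = 1 := by
  apply mat2_ext <;> simp [RzM]

/-- Two additional ladders turn arbitrary local layers into `Ry`-`Rz` layers: the `Rz`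
applied first in an Euler decomposition commutes with the diagonal ladder and is absorbed by the
preceding layer; at the start of the circuit two ladders cancel around an `Rz` layer, which leaves
room for a full local unitary. -/
lemma Circ.ans {m : ℕ} {U : QOp N} (h : Circ m U) : Ans (m + 2) U := by
  induction m generalizing U with
  | zero =>
    cases h with
    | base f hf =>
    -- Any fixed `Ry` angle serves for the first layer; it is undone before decomposing `f`.
    obtain ⟨φ, a, b, c, hE⟩ := euler_layer (fun k => f k * star (RyM (Real.pi / 2)))
      fun k => mul_mem (hf k) (Unitary.star_mem (RyM_unitary _))
    have e0 : rotYZ (fun _ => Real.pi / 2) (fun _ => 0) =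
        tens fun _ : Fin N => RyM (Real.pi / 2) := by
      change tens _ = _
      congr 1; funext k; rw [RzM_zero, one_mul]
    have e1 : rotYZ (fun _ => 0) c = tens fun k : Fin N => RzM (c k) := by
      change tens _ = _
      congr 1; funext k; rw [RyM_zero, mul_one]
    have key : tens f = cexp (φ * I) • (rotYZ b a * ladderCZ N *
        (rotYZ (fun _ => 0) c * ladderCZ N * rotYZ (fun _ => Real.pi / 2) fun _ => 0)) := by
      rw [e0, e1, tens_RzM_comm, ← mul_assoc, mul_assoc _ (ladderCZ N), ← mul_assoc (ladderCZ N),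
        ladder_sq, one_mul, ← smul_mul_assoc, ← hE, tens_mul]
      congr 1; funext k
      rw [Pi.mul_apply, mul_assoc, mem_unitaryGroup_iff'.1 (RyM_unitary _), mul_one]
    rw [key]
    exact (((Ans.base _ _).step _ _).step _ _).phase φ
  | succ m ih =>
    cases h with
    | step f hf hV =>
    rename_i V
    obtain ⟨φ, a, b, c, hE⟩ := euler_layer f hf
    have h1 := ih (hV.local_mul _ fun k => RzM_unitary (c k))
    have key : tens f * ladderCZ N * V =
        cexp (φ * I) • (rotYZ b a * ladderCZ N * ((tens fun k => RzM (c k)) * V)) := by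
      rw [hE, smul_mul_assoc, smul_mul_assoc, mul_assoc (rotYZ b a), tens_RzM_comm]
      simp only [mul_assoc]
    rw [key]
    exact (h1.step b a).phase φ

/-! ### The CNOT gate -/

/-- `CNOT = (1 + Z_c + X_t - Z_c X_t)/2`. -/
lemma CNOT_eq (c t : Fin N) (h : c ≠ t) :
    CNOTg c t = (1 / 2 : ℂ) • (1 + pz c + px t - pz c * px t) := by
  ext x y
  rw [pz_apply]
  simp only [CNOTg, Matrix.of_apply, Matrix.smul_apply, Matrix.sub_apply, Matrix.add_apply,
    Matrix.diagonal_mul, px_apply, Matrix.one_apply, Matrix.diagonal_apply, smul_eq_mul]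
  have hne : y ≠ flip t y := by
    intro h'
    have := congrFun h' t
    rw [flip, Function.update_self] at this
    revert this; generalize y t = a; revert a; decide
  rcases zmod2_cases (y c) with hy | hy
  · rw [hy, add_zero, Function.update_eq_self]
    by_cases h1 : x = y
    · subst h1; rw [if_neg hne]; simp [sgn, hy]; norm_num
    · by_cases h2 : x = flip t y
      · have : x c = 0 := by rw [h2, flip, Function.update_of_ne h, hy]
        simp [h1, this, sgn]
      · simp [h1, h2]
  · rw [hy]
    change (if x = flip t y then (1 : ℂ) else 0) = _
    by_cases h1 : x = y
    · subst h1; rw [if_neg hne]; simp [sgn, hy]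
    · by_cases h2 : x = flip t y
      · have : x c = 1 := by rw [h2, flip, Function.update_of_ne h, hy]
        simp [h2, sgn, hne.symm]
        norm_num [← h2, this]
      · simp [h1, h2]

lemma exp_pi_div_four : cexp ((Real.pi / 4 : ℝ) * I) =
    (((Real.sqrt 2)⁻¹ : ℝ) : ℂ) * (1 + I) := by
  rw [Complex.exp_mul_I, ← Complex.ofReal_cos, ← Complex.ofReal_sin, Real.cos_pi_div_four,
    Real.sin_pi_div_four]
  have : Real.sqrt 2 / 2 = (Real.sqrt 2)⁻¹ := by
    rw [div_eq_iff two_ne_zero, eq_comm, inv_mul_eq_iff_eq_mul₀ (by positivity),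
      Real.mul_self_sqrt (by norm_num)]
  rw [this]; ring

/-- CNOT is the product of the commuting rotations generated by `-Z_c`, `-X_t` and `Z_c X_t`. -/
lemma CNOT_eq_rot (c t : Fin N) (h : c ≠ t) :
    CNOTg c t = cexp ((Real.pi / 4 : ℝ) * I) •
      (rot (-pz c) * rot (-px t) * rot (pz c * px t)) := by
  have hz := pz_sq c
  have hx := px_sq t
  have hc := px_pz h.symm
  have e : (1 + I • -pz c) * (1 + I • -px t) * (1 + I • (pz c * px t)) =
      (1 - I) • (1 + pz c + px t - pz c * px t) := by
    have h1 : pz c * (pz c * px t) = px t := by rw [← mul_assoc, hz, one_mul]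
    have h2 : px t * (pz c * px t) = pz c := by rw [← mul_assoc, hc, mul_assoc, hx, mul_one]
    simp only [mul_add, add_mul, one_mul, mul_one, smul_neg, neg_mul, mul_neg, smul_mul_assoc,
      mul_smul_comm, mul_assoc, h1, h2, hz, smul_add, smul_smul, I_mul_I]
    match_scalars <;> ring
  rw [CNOT_eq c t h, exp_pi_div_four, rot, rot, rot, smul_mul_smul_comm, smul_mul_smul_comm, e,
    smul_smul, smul_smul]
  congr 1
  have hI := I_mul_I
  have h2 := sqrt2_inv_sq
  generalize (((Real.sqrt 2)⁻¹ : ℝ) : ℂ) = s at *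
  linear_combination (-(s * s + 1 / 2) * 2) * h2 + s ^ 4 * hI

lemma CNOT_ans (c t : Fin N) (h : c ≠ t) : ∃ m, m ≤ 8 * N * N + 2 ∧ Ans m (CNOTg c t) := by
  obtain ⟨m, hm, hg⟩ := gen_zx c t h
  refine ⟨m + 2, by omega, ?_⟩
  rw [CNOT_eq_rot c t h]
  have := ((gen_pz c).neg.circ.mul (gen_px t).neg.circ).mul hg.circ
  rw [zero_add, zero_add] at this
  exact this.ans.phase _

end AnsatzCNOT

end

/-- for every `N ≥ 2` and distinct 1-based qubits `k, l ∈ {1,…,N}`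
(qubit `q` ↦ index `q−1`), there are a depth `M ≤ 192·N² − 16·N − 122`, angles, and a
real phase `φ` such that the `N`-qubit depth-`M` Ry-Rz-CZ ansatz equals `e^{iφ}·CNOT_{k,l}`. -/
theorem CNOT_in_ansatzYZ (N : ℕ) (hN : 2 ≤ N) (k l : ℕ)
    (hk1 : 1 ≤ k) (hk2 : k ≤ N) (hl1 : 1 ≤ l) (hl2 : l ≤ N) (hkl : k ≠ l) :
    ∃ M : ℕ, (M : ℤ) ≤ 192 * (N : ℤ) ^ 2 - 16 * (N : ℤ) - 122 ∧
      ∃ (α β : ℕ → Fin N → ℝ) (φ : ℝ),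
        ansatzYZ N α β M =
          Complex.exp (φ * Complex.I) •
            CNOTg (⟨k - 1, by omega⟩ : Fin N) ⟨l - 1, by omega⟩ := by
  obtain ⟨m, hm, α, β, φ, h⟩ := AnsatzCNOT.CNOT_ans (⟨k - 1, by omega⟩ : Fin N)
    ⟨l - 1, by omega⟩ (by rw [Ne, Fin.mk.injEq]; omega)
  refine ⟨m, ?_, α, β, -φ, ?_⟩
  · zify at hm hN
    nlinarith
  · rw [h, smul_smul, ← Complex.exp_add]
    simp
end

section
/- There exist real rotation angles such that the 6-qubit Ry-CNOT ansatz circuit of depth 128 with those angles equals exactly the gate CNOT_{2,1} on 6 qubits (control qubit 2, target qubit 1, identity on qubits 3, 4, 5, 6). -/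
/-!
Write `L` for the CNOT ladder, `P(x,z)` for the Pauli operator `|b⟩ ↦ (-1)^{z·b}|b+x⟩`, and
`K_j = P(e_j,e_j)`. A rotation by `±π/2` of qubit `j` is `(1 ± K_j)/√2`. Pauli operators multiply
by `P(x,z) P(u,v) = (-1)^{z·u} P(x+u,z+v)`, conjugation by `L` permutes them, and `L ^ 8 = 1`.

With 0-based qubits, rotate qubits `1, 2, 4` by `π/2` in layer `1`, qubit `4` by `π/2, -π/2, -π/2`
in layers `3, 5, 7`, and qubits `1, 2` by `-π/2` in layer `9`; every other angle is zero.
Let `C = (1 + K_1)(1 + K_2)/2` be the part of layer `1` on qubits `1, 2`, so that layer `9` is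
`C⁻¹`. Moving the powers of `L` between layers `1` and `9` to the left turns the
rotations of qubit `4` into `M = ¼ (1 - A₃)(1 - A₂)(1 + A₁)(1 + A₀)` with `A_t = L^{-2t} K_4 L^{2t}`
and leaves the circuit as `L^119 C⁻¹ L^8 M C L`.

The four operators `A_t` commute and their product is a sign, so `M` collapses to the form
`½ (1 + A + B - A B)` with commuting Paulis `A, B` of square one (`siegel_eq`). This is also the form
of a CNOT, `½ (1 + Z_1 + X_0 - X_0 Z_1)` (`cnot_eq`). The operators `A, B` are such that conjugating
by `C` and then by `L` carries them to `Z_1` and `X_0` (`siegel_conj`, `siegel_ladder`), that is,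
`M C L = C L · CNOT`. The circuit is therefore `L^120 · CNOT = CNOT`.
-/

open Complex

theorem zmod_two_cases : ∀ a : ZMod 2, a = 0 ∨ a = 1 := by decide

/-! ### Pauli operators and the ladder -/

/-- The sign character `t ↦ (-1)^t` of `ZMod 2`. -/
def sg (t : ZMod 2) : ℂ := if t = 0 then 1 else -1

theorem sg_add (a b : ZMod 2) : sg (a + b) = sg a * sg b := by
  rcases zmod_two_cases a with rfl | rfl <;> rcases zmod_two_cases b with rfl | rfl <;>
    simp [sg, (by decide : (1 : ZMod 2) + 1 = 0)]

/-- The Pauli operator `|b⟩ ↦ (-1)^{z·b}|b+x⟩`, i.e. `X^x Z^z` without any factor of `i`. -/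
def pauli {N : ℕ} (x z : QState N) : QOp N :=
  Matrix.of fun a b => if a = b + x then sg (z ⬝ᵥ b) else 0

theorem pauli_mul {N : ℕ} (x z u v : QState N) :
    pauli x z * pauli u v = sg (z ⬝ᵥ u) • pauli (x + u) (z + v) := by
  ext a b
  rw [Matrix.mul_apply, Finset.sum_eq_single (b + u)]
  · have h : b + u + x = b + (x + u) := by abel
    by_cases hab : a = b + (x + u)
    · simp only [pauli, Matrix.of_apply, Matrix.smul_apply, h, hab, if_true, smul_eq_mul,
        dotProduct_add, add_dotProduct, sg_add]
      ring
    · simp [pauli, h, hab]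
  · intro c _ hc
    simp [pauli, hc]
  · simp

theorem pauli_zero {N : ℕ} : (pauli 0 0 : QOp N) = 1 := by
  ext a b
  simp [pauli, sg, Matrix.one_apply]

/-- The ladder permutes basis states by a linear map `f`, so it carries `X^u` to `X^{f u}` and
pulls back `Z^z` along `f`; the hypothesis says exactly this for the given labels. -/
theorem pauli_ladder (x z u v : QState 6)
    (h : ∀ b, layer2Map 6 (layer1Map 6 (b + u)) = layer2Map 6 (layer1Map 6 b) + x ∧
      z ⬝ᵥ layer2Map 6 (layer1Map 6 b) = v ⬝ᵥ b) :
    pauli x z * ladderCNOT 6 = ladderCNOT 6 * pauli u v := by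
  ext a b
  rw [Matrix.mul_apply, Matrix.mul_apply,
    Finset.sum_eq_single (layer2Map 6 (layer1Map 6 b)), Finset.sum_eq_single (b + u)]
  · simp [pauli, ladderCNOT, (h b).1, (h b).2]
  · intro c _ hc
    simp [pauli, hc]
  · simp
  · intro c _ hc
    simp [ladderCNOT, hc]
  · simp

theorem ladder_pow (n : ℕ) : ladderCNOT 6 ^ n = Matrix.of fun x y =>
    if x = (fun y => layer2Map 6 (layer1Map 6 y))^[n] y then (1 : ℂ) else 0 := by
  induction n with
  | zero => ext a b; by_cases h : a = b <;> simp [h]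
  | succ n ih =>
    ext a b
    rw [pow_succ, ih, Matrix.mul_apply, Finset.sum_eq_single (layer2Map 6 (layer1Map 6 b))]
    · simp only [ladderCNOT, Matrix.of_apply, if_true, mul_one, Function.iterate_succ_apply]
      congr 1
    · intro c _ hc
      simp [ladderCNOT, hc]
    · simp

theorem ladder_pow_eight : ladderCNOT 6 ^ 8 = 1 := by
  have h : ∀ y : QState 6, (fun y => layer2Map 6 (layer1Map 6 y))^[8] y = y := by
    decide +kernel
  rw [ladder_pow]
  ext a b
  simp only [Matrix.of_apply, h, Matrix.one_apply]

/-- The bit string of length `6` whose entry `i` is the `i`-th binary digit of `n`. -/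
def bv (n : ℕ) : QState 6 := fun i => if n.testBit i then 1 else 0

theorem bv_xor (m n : ℕ) : bv m + bv n = bv (m ^^^ n) := by
  funext i
  simp only [bv, Pi.add_apply, Nat.testBit_xor]
  cases m.testBit i <;> cases n.testBit i <;> decide

/-- The six-qubit Pauli operator `X^x Z^z`, its two bit strings encoded as binary numbers. -/
def S (x z : ℕ) : QOp 6 := pauli (bv x) (bv z)

theorem S_zero : S 0 0 = 1 := by
  have : bv 0 = 0 := by decide
  rw [S, this, pauli_zero]

theorem S_mul (x z u v : ℕ) :
    S x z * S u v = (if bv z ⬝ᵥ bv u = 0 then (1 : ℂ) else -1) • S (x ^^^ u) (z ^^^ v) := by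
  simp only [S, pauli_mul, bv_xor, sg]

theorem S_ladder (x z u v : ℕ)
    (h : ∀ b, layer2Map 6 (layer1Map 6 (b + bv u)) = layer2Map 6 (layer1Map 6 b) + bv x ∧
      bv z ⬝ᵥ layer2Map 6 (layer1Map 6 b) = bv v ⬝ᵥ b) :
    S x z * ladderCNOT 6 = ladderCNOT 6 * S u v :=
  pauli_ladder _ _ _ _ h

/-- `CNOT = ½ (1 + Z + X - X Z)`, with `Z` on the control and `X` on the target. -/
theorem cnot_eq : CNOTg (1 : Fin 6) 0 =
    (1 / 2 : ℂ) • (1 + S 0 2 + S 1 0 - S 1 2) := by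
  ext a b
  have h1 : bv 2 ⬝ᵥ b = b 1 := by revert b; decide +kernel
  have h2 : Function.update b 0 (b 0 + b 1) = if b 1 = 0 then b else b + bv 1 := by
    revert b; decide +kernel
  have h3 : bv 0 = 0 := by decide
  have h4 : b ≠ b + bv 1 := by
    revert b; decide +kernel
  simp only [CNOTg, S, pauli, sg, Matrix.of_apply, Matrix.smul_apply, Matrix.add_apply,
    Matrix.sub_apply, Matrix.one_apply, h1, h3, add_zero, zero_dotProduct]
  rw [h2]
  by_cases hb : b 1 = 0 <;> by_cases ha : a = b
  · subst ha; simp [hb, h4]; norm_num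
  · simp [hb, ha]
  · subst ha; simp [hb, h4]
  · simp [hb, ha]; split_ifs <;> norm_num

/-! ### Rotation layers -/

theorem RyM_add (s t : ℝ) : RyM s * RyM t = RyM (s + t) := by
  ext a b
  have hsum : ∀ f : ZMod 2 → ℂ, ∑ c, f c = f 0 + f 1 := fun f => Fin.sum_univ_two f
  have h : (s + t) / 2 = s / 2 + t / 2 := by ring
  rw [Matrix.mul_apply, hsum]
  rcases zmod_two_cases a with rfl | rfl <;> rcases zmod_two_cases b with rfl | rfl <;>
    simp [RyM, h, Complex.cos_add, Complex.sin_add] <;> ring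

theorem rotY_add {N : ℕ} (α β : Fin N → ℝ) : rotY α * rotY β = rotY (α + β) := by
  ext x y
  simp only [rotY, Matrix.mul_apply, Matrix.of_apply, ← Finset.prod_mul_distrib, Pi.add_apply,
    ← RyM_add]
  rw [Finset.prod_univ_sum, Fintype.piFinset_univ]

theorem RyM_zero : RyM 0 = 1 := by
  ext a b
  rcases zmod_two_cases a with rfl | rfl <;> rcases zmod_two_cases b with rfl | rfl <;> simp [RyM]

theorem rotY_zero {N : ℕ} : rotY (0 : Fin N → ℝ) = 1 := by
  ext x y
  simp only [rotY, Matrix.of_apply, Pi.zero_apply, RyM_zero, Matrix.one_apply]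
  rw [Fintype.prod_ite_zero]
  simp [funext_iff]

theorem RyM_apply (θ : ℝ) (a b : ZMod 2) : RyM θ a b =
    (if a = b then (Real.cos (θ / 2) : ℂ) else 0) +
      (if a = b + 1 then Real.sin (θ / 2) * sg b else 0) := by
  rcases zmod_two_cases a with rfl | rfl <;> rcases zmod_two_cases b with rfl | rfl <;>
    simp [RyM, sg, (by decide : (1 : ZMod 2) + 1 = 0)]

theorem rotY_single {N : ℕ} (j : Fin N) (θ : ℝ) : rotY (Pi.single j θ) =
    (Real.cos (θ / 2) : ℂ) • 1 +
      (Real.sin (θ / 2) : ℂ) • pauli (Pi.single j 1) (Pi.single j 1) := by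
  ext x y
  simp only [rotY, Matrix.of_apply, Matrix.add_apply, Matrix.smul_apply, Matrix.one_apply, pauli,
    single_dotProduct, one_mul, smul_eq_mul]
  rw [← Finset.mul_prod_erase _ _ (Finset.mem_univ j), Pi.single_eq_same, RyM_apply]
  have hp : ∏ k ∈ Finset.univ.erase j, RyM ((Pi.single j θ : Fin N → ℝ) k) (x k) (y k) =
      if ∀ k, k ≠ j → x k = y k then 1 else 0 := by
    rw [Finset.prod_congr rfl (g := fun k => if x k = y k then (1 : ℂ) else 0),
      Finset.prod_ite_zero]
    · simp
    · intro k hk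
      rw [Pi.single_eq_of_ne (Finset.ne_of_mem_erase hk), RyM_zero, Matrix.one_apply]
  have e1 : x = y ↔ x j = y j ∧ ∀ k, k ≠ j → x k = y k := by
    rw [funext_iff]
    refine ⟨fun h => ⟨h j, fun k _ => h k⟩, fun h k => ?_⟩
    by_cases hk : k = j
    · rw [hk]; exact h.1
    · exact h.2 k hk
  have e2 : x = y + Pi.single j 1 ↔ x j = y j + 1 ∧ ∀ k, k ≠ j → x k = y k := by
    rw [funext_iff]
    refine ⟨fun h => ⟨by simpa using h j, fun k hk => by simpa [hk] using h k⟩, fun h k => ?_⟩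
    by_cases hk : k = j
    · subst hk; simpa using h.1
    · simpa [hk] using h.2 k hk
  rw [hp]
  by_cases hq : ∀ k, k ≠ j → x k = y k
  · simp only [if_pos hq, e1.trans (and_iff_left hq), e2.trans (and_iff_left hq)]
    simp
  · have n1 : ¬x = y := fun h => hq (e1.1 h).2
    have n2 : ¬x = y + Pi.single j 1 := fun h => hq (e2.1 h).2
    simp only [if_neg hq, if_neg n1, if_neg n2, mul_zero, add_zero]

theorem rot_pos (j : Fin 6) : rotY (Pi.single j (Real.pi / 2)) =
    ((Real.sqrt 2 / 2 : ℝ) : ℂ) • (1 + S (2 ^ (j : ℕ)) (2 ^ (j : ℕ))) := by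
  have h : bv (2 ^ (j : ℕ)) = Pi.single j 1 := by revert j; decide +kernel
  rw [rotY_single, S, h, (by ring : Real.pi / 2 / 2 = Real.pi / 4), Real.cos_pi_div_four,
    Real.sin_pi_div_four, smul_add]

theorem rot_neg (j : Fin 6) : rotY (Pi.single j (-(Real.pi / 2))) =
    ((Real.sqrt 2 / 2 : ℝ) : ℂ) • (1 - S (2 ^ (j : ℕ)) (2 ^ (j : ℕ))) := by
  have h : bv (2 ^ (j : ℕ)) = Pi.single j 1 := by revert j; decide +kernel
  rw [rotY_single, S, h, (by ring : -(Real.pi / 2) / 2 = -(Real.pi / 4)), Real.cos_neg,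
    Real.sin_neg, Real.cos_pi_div_four, Real.sin_pi_div_four, smul_sub, Complex.ofReal_neg,
    neg_smul, sub_eq_add_neg]

/-! ### The circuit -/

/-- The rotation angles `angles i k` of layer `i` on the (0-based) qubit `k`; zero outside the
odd layers up to `9`. -/
noncomputable def angles : ℕ → Fin 6 → ℝ
  | 1 => Pi.single 1 (Real.pi / 2) + Pi.single 2 (Real.pi / 2) + Pi.single 4 (Real.pi / 2)
  | 3 => Pi.single 4 (Real.pi / 2)
  | 5 => Pi.single 4 (-(Real.pi / 2))
  | 7 => Pi.single 4 (-(Real.pi / 2))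
  | 9 => Pi.single 1 (-(Real.pi / 2)) + Pi.single 2 (-(Real.pi / 2))
  | _ => 0

theorem ansatz_tail (n : ℕ) :
    ansatzY 6 angles (9 + n) = ladderCNOT 6 ^ n * ansatzY 6 angles 9 := by
  induction n with
  | zero => simp
  | succ n ih =>
    have h : angles (9 + n + 1) = 0 := by
      unfold angles
      split <;> first | omega | rfl
    rw [← add_assoc, ansatzY, h, rotY_zero, one_mul, ih, pow_succ', mul_assoc]

theorem S_ladder_sq (x z x' z' u v : ℕ) (h₁ : S x z * ladderCNOT 6 = ladderCNOT 6 * S x' z')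
    (h₂ : S x' z' * ladderCNOT 6 = ladderCNOT 6 * S u v) :
    S x z * ladderCNOT 6 ^ 2 = ladderCNOT 6 ^ 2 * S u v := by
  rw [pow_two, ← mul_assoc, h₁, mul_assoc, h₂, mul_assoc]


/-- The product of the four (unnormalised) rotations generated by commuting Paulis whose product is a
sign: the terms of odd degree cancel and those of even degree pair up. -/
theorem siegel_eq :
    (1 - S 22 16) * ((1 - S 17 16) * ((1 + S 23 16) * (1 + S 16 16))) =
      (2 : ℂ) • (1 - S 7 0 + S 1 0 + S 6 0) := by
  simp only [mul_add, add_mul, mul_sub, sub_mul, one_mul, mul_one, S_mul, Nat.reduceXor,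
    mul_smul_comm]
  simp +decide only [if_true, if_false, S_zero]
  module

theorem siegel_conj :
    (1 - S 7 0 + S 1 0 + S 6 0) * ((1 + S 2 2) * (1 + S 4 4)) =
      (1 + S 2 2) * ((1 + S 4 4) * (1 + S 0 6 + S 1 0 - S 1 6)) := by
  simp only [mul_add, add_mul, mul_sub, sub_mul, one_mul, mul_one, S_mul, Nat.reduceXor,
    mul_smul_comm]
  simp +decide only [if_true]
  module

theorem conj_cancel :
    (1 - S 2 2) * ((1 - S 4 4) * ((1 + S 2 2) * (1 + S 4 4))) = (4 : ℂ) • 1 := by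
  simp only [mul_add, add_mul, mul_sub, sub_mul, one_mul, mul_one, S_mul, Nat.reduceXor,
    mul_smul_comm]
  simp +decide only [if_true, if_false, S_zero]
  module

theorem siegel_ladder :
    (1 + S 0 6 + S 1 0 - S 1 6) * ladderCNOT 6 =
      ladderCNOT 6 * (1 + S 0 2 + S 1 0 - S 1 2) := by
  simp only [mul_add, add_mul, mul_sub, sub_mul, one_mul, mul_one]
  rw [S_ladder 0 6 0 2 (by decide +kernel), S_ladder 1 0 1 0 (by decide +kernel),
    S_ladder 1 6 1 2 (by decide +kernel)]

/-- The rotation axis of qubit `4` moved through two ladders; `rot_conj_two` and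
`rot_conj_three` move it through two more each. -/
theorem rot_conj_one : S 16 16 * ladderCNOT 6 ^ 2 = ladderCNOT 6 ^ 2 * S 23 16 :=
  S_ladder_sq 16 16 28 48 23 16 (S_ladder _ _ _ _ (by decide +kernel))
    (S_ladder _ _ _ _ (by decide +kernel))

theorem rot_conj_two : S 23 16 * ladderCNOT 6 ^ 2 = ladderCNOT 6 ^ 2 * S 17 16 :=
  S_ladder_sq 23 16 25 48 17 16 (S_ladder _ _ _ _ (by decide +kernel))
    (S_ladder _ _ _ _ (by decide +kernel))

theorem rot_conj_three : S 17 16 * ladderCNOT 6 ^ 2 = ladderCNOT 6 ^ 2 * S 22 16 :=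
  S_ladder_sq 17 16 29 48 22 16 (S_ladder _ _ _ _ (by decide +kernel))
    (S_ladder _ _ _ _ (by decide +kernel))

theorem one_add_mul_comm_of {R : Type*} [Ring R] {a b l : R} (h : a * l = l * b) :
    (1 + a) * l = l * (1 + b) := by
  rw [add_mul, mul_add, h, one_mul, mul_one]

theorem one_sub_mul_comm_of {R : Type*} [Ring R] {a b l : R} (h : a * l = l * b) :
    (1 - a) * l = l * (1 - b) := by
  rw [sub_mul, mul_sub, h, one_mul, mul_one]

/-- The rotations of qubit `4` in layers `3, 5, 7`, with the ladders collected on the left. -/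
theorem word_eq :
    (1 - S 16 16) * (ladderCNOT 6 ^ 2 * ((1 - S 16 16) * (ladderCNOT 6 ^ 2 *
      ((1 + S 16 16) * ladderCNOT 6 ^ 2)))) =
      ladderCNOT 6 ^ 6 * ((1 - S 22 16) * ((1 - S 17 16) * (1 + S 23 16))) := by
  have h₁ := one_sub_mul_comm_of rot_conj_one
  have h₂ := one_sub_mul_comm_of rot_conj_two
  have h₃ := one_sub_mul_comm_of rot_conj_three
  rw [one_add_mul_comm_of rot_conj_one, ← mul_assoc (1 - S 16 16) (ladderCNOT 6 ^ 2) _, h₁]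
  simp only [mul_assoc]
  rw [← mul_assoc (1 - S 16 16) (ladderCNOT 6 ^ 2) _, h₁]
  simp only [mul_assoc]
  rw [← mul_assoc (1 - S 23 16) (ladderCNOT 6 ^ 2) _, h₂]
  simp only [mul_assoc]
  rw [← mul_assoc (1 - S 23 16) (ladderCNOT 6 ^ 2) _, h₂]
  simp only [mul_assoc]
  rw [← mul_assoc (1 - S 17 16) (ladderCNOT 6 ^ 2) _, h₃]
  simp only [mul_assoc]
  have h6 : ladderCNOT 6 ^ 6 = ladderCNOT 6 ^ 2 * (ladderCNOT 6 ^ 2 * ladderCNOT 6 ^ 2) := by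
    rw [← pow_add, ← pow_add]
  rw [h6]
  simp only [mul_assoc]

theorem ansatz_nine : ansatzY 6 angles 9 =
    (1 / 16 : ℂ) • ((1 - S 2 2) * ((1 - S 4 4) * (ladderCNOT 6 ^ 2 *
      ((1 - S 16 16) * (ladderCNOT 6 ^ 2 * ((1 - S 16 16) * (ladderCNOT 6 ^ 2 *
      ((1 + S 16 16) * (ladderCNOT 6 ^ 2 *
      ((1 + S 16 16) * ((1 + S 2 2) * ((1 + S 4 4) * ladderCNOT 6)))))))))))) := by
  have hc : ((Real.sqrt 2 / 2 : ℝ) : ℂ) ^ 8 = 1 / 16 := by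
    rw [← Complex.ofReal_pow, div_pow, (by norm_num : 8 = 2 * 4), pow_mul,
      Real.sq_sqrt (by norm_num)]
    norm_num
  -- qubit `4` is listed first: rotations of distinct qubits commute, and this order puts its
  -- rotation next to those of the later layers
  have h1 : angles 1 =
      Pi.single 4 (Real.pi / 2) + Pi.single 1 (Real.pi / 2) + Pi.single 2 (Real.pi / 2) := by
    simp only [angles]; abel
  have h9 : angles 9 = Pi.single 1 (-(Real.pi / 2)) + Pi.single 2 (-(Real.pi / 2)) := rfl
  have h0 : angles 0 = 0 := rfl
  have h2 : angles 2 = 0 := rfl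
  have h3 : angles 3 = Pi.single 4 (Real.pi / 2) := rfl
  have h4 : angles 4 = 0 := rfl
  have h5 : angles 5 = Pi.single 4 (-(Real.pi / 2)) := rfl
  have h6 : angles 6 = 0 := rfl
  have h7 : angles 7 = Pi.single 4 (-(Real.pi / 2)) := rfl
  have h8 : angles 8 = 0 := rfl
  have v1 : 2 ^ ((1 : Fin 6) : ℕ) = 2 := rfl
  have v2 : 2 ^ ((2 : Fin 6) : ℕ) = 4 := rfl
  have v4 : 2 ^ ((4 : Fin 6) : ℕ) = 16 := rfl
  simp only [ansatzY, Nat.reduceAdd, zero_add, h0, h1, h2, h3, h4, h5, h6, h7, h8, h9, rotY_zero,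
    ← rotY_add, rot_pos, rot_neg, v1, v2, v4, one_mul, mul_one, smul_mul_assoc, mul_smul_comm,
    smul_smul, ← hc, pow_two, mul_assoc]
  congr 1
  ring

/-- there are angles such that the 6-qubit depth-128 Ry-CNOT ansatz equals
exactly `CNOT_{2,1}` (control qubit 2 ↦ index 1, target qubit 1 ↦ index 0). -/
theorem CNOT21_in_ansatzY_6qubits :
    ∃ α : ℕ → Fin 6 → ℝ,
      ansatzY 6 α 128 = CNOTg (⟨1, by omega⟩ : Fin 6) ⟨0, by omega⟩ := by
  refine ⟨angles, ?_⟩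
  change _ = CNOTg (1 : Fin 6) 0
  rw [(by norm_num : 128 = 9 + 119), ansatz_tail, ansatz_nine, cnot_eq]
  have hw := congrArg (fun X => X * ((1 + S 16 16) * ((1 + S 2 2) * ((1 + S 4 4) * ladderCNOT 6))))
    word_eq
  simp only [mul_assoc] at hw
  have h8 : ∀ X : QOp 6, ladderCNOT 6 ^ 2 * (ladderCNOT 6 ^ 6 * X) = X := fun X => by
    rw [← mul_assoc, ← pow_add, ladder_pow_eight, one_mul]
  have hs := congrArg (fun X => X * ((1 + S 2 2) * ((1 + S 4 4) * ladderCNOT 6))) siegel_eq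
  simp only [mul_assoc] at hs
  have hj := congrArg (fun X => X * ladderCNOT 6) siegel_conj
  simp only [mul_assoc] at hj
  have hk := congrArg (fun X => X * (ladderCNOT 6 * (1 + S 0 2 + S 1 0 - S 1 2))) conj_cancel
  simp only [mul_assoc] at hk
  rw [hw, h8, hs, smul_mul_assoc, hj, siegel_ladder, mul_smul_comm, mul_smul_comm, mul_smul_comm, hk,
    smul_mul_assoc, one_mul, mul_smul_comm, mul_smul_comm, ← mul_assoc, ← pow_succ,
    (by norm_num : 119 + 1 = 8 * 15), pow_mul, ladder_pow_eight, one_pow, one_mul, smul_smul,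
    smul_smul]
  norm_num
end
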